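/- Let H be a Horton set with at least 4 points. An edge spanned by two points of H is visible from below if and only if its endpoints are two consecutive points (in x-order) of H_b, where b is a binary string consisting of a single 1 followed by an arbitrary number (possibly zero) of 0s; and an edge is visible from above if and only if its endpoints are two consecutive points of H_b, where b is a binary string consisting of a single 0 followed by an arbitrary number (possibly zero) of 1s. -/

import Mathlib

open scoped Classical

noncomputable section

/-- Euclidean distance between two points of the plane `ℝ × ℝ`. -/
def elen (p q : ℝ × ℝ) : ℝ := Real.sqrt ((p.1 - q.1) ^ 2 + (p.2 - q.2) ^ 2)

/-- Orientation determinant of an ordered triple of points. -/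
def orient (a b c : ℝ × ℝ) : ℝ :=
  (b.1 - a.1) * (c.2 - a.2) - (b.2 - a.2) * (c.1 - a.1)

/-- A planar point set is in general position if no three distinct points are collinear. -/
def GeneralPosition (S : Set (ℝ × ℝ)) : Prop :=
  ∀ a ∈ S, ∀ b ∈ S, ∀ c ∈ S, a ≠ b → a ≠ c → b ≠ c →
    ¬ Collinear ℝ ({a, b, c} : Set (ℝ × ℝ))

/-- No two points of `S` share an `x`-coordinate. -/
def DistinctX (S : Set (ℝ × ℝ)) : Prop :=
  ∀ a ∈ S, ∀ b ∈ S, a ≠ b → a.1 ≠ b.1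

/-- `p` lies strictly below the (non-vertical) line through `a` and `b`, where `a.1 < b.1`. -/
def StrictlyBelow (p a b : ℝ × ℝ) : Prop :=
  (b.1 - a.1) * (p.2 - a.2) < (b.2 - a.2) * (p.1 - a.1)

/-- `p` lies strictly above the (non-vertical) line through `a` and `b`, where `a.1 < b.1`. -/
def StrictlyAbove (p a b : ℝ × ℝ) : Prop :=
  (b.2 - a.2) * (p.1 - a.1) < (b.1 - a.1) * (p.2 - a.2)

/-- `Y` is high above `X`: every line through two points of `Y` is above every point of `X`. -/
def HighAbove (Y X : Set (ℝ × ℝ)) : Prop :=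
  ∀ a ∈ Y, ∀ b ∈ Y, a.1 < b.1 → ∀ p ∈ X, StrictlyBelow p a b

/-- `X` is deep below `Y`: every line through two points of `X` is below every point of `Y`. -/
def DeepBelow (X Y : Set (ℝ × ℝ)) : Prop :=
  ∀ a ∈ X, ∀ b ∈ X, a.1 < b.1 → ∀ p ∈ Y, StrictlyAbove p a b

/-- The even-indexed points of `H` in increasing order of `x`-coordinate (`H₀`). -/
def evenPart (H : Finset (ℝ × ℝ)) : Finset (ℝ × ℝ) :=
  H.filter fun p => Even (H.filter fun q => q.1 < p.1).card

/-- The odd-indexed points of `H` in increasing order of `x`-coordinate (`H₁`). -/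
def oddPart (H : Finset (ℝ × ℝ)) : Finset (ℝ × ℝ) :=
  H.filter fun p => ¬ Even (H.filter fun q => q.1 < p.1).card

/-- Horton sets. -/
inductive IsHorton : Finset (ℝ × ℝ) → Prop
  | small (H : Finset (ℝ × ℝ)) (hgp : GeneralPosition ↑H) (hx : DistinctX ↑H)
      (hcard : H.card ≤ 2) : IsHorton H
  | split (H : Finset (ℝ × ℝ)) (hgp : GeneralPosition ↑H) (hx : DistinctX ↑H)
      (hcard : 2 < H.card) (h0 : IsHorton (evenPart H)) (h1 : IsHorton (oddPart H))
      (hhigh : HighAbove ↑(oddPart H) ↑(evenPart H))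
      (hdeep : DeepBelow ↑(evenPart H) ↑(oddPart H)) : IsHorton H

/-- `t` is an empty triangle of the point set `S`: a three-element non-collinear subset of `S`
whose open interior contains no point of `S`. -/
def IsEmptyTriangleOf (S : Set (ℝ × ℝ)) (t : Finset (ℝ × ℝ)) : Prop :=
  t.card = 3 ∧ (↑t : Set (ℝ × ℝ)) ⊆ S ∧ ¬ Collinear ℝ (↑t : Set (ℝ × ℝ)) ∧
    ∀ p ∈ S, p ∉ interior (convexHull ℝ (↑t : Set (ℝ × ℝ)))

/-- `τ S`: the number of empty triangles of `S`. -/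
def tau (S : Set (ℝ × ℝ)) : ℕ :=
  {t : Finset (ℝ × ℝ) | IsEmptyTriangleOf S t}.ncard

/-- The number of empty triangles of `S` stabbed by the point `q`. -/
def stabbedCount (S : Set (ℝ × ℝ)) (q : ℝ × ℝ) : ℕ :=
  {t : Finset (ℝ × ℝ) | IsEmptyTriangleOf S t ∧
    q ∈ interior (convexHull ℝ (↑t : Set (ℝ × ℝ)))}.ncard

/-- The number of empty triangles of `S` having `q` as a vertex. -/
def incidentCount (S : Set (ℝ × ℝ)) (q : ℝ × ℝ) : ℕ :=
  {t : Finset (ℝ × ℝ) | IsEmptyTriangleOf S t ∧ q ∈ t}.ncard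

/-- `H_b` for a binary string `b` (first character applied first):
recursively take the odd (`true`) or even (`false`) part. -/
def subPart (H : Finset (ℝ × ℝ)) : List Bool → Finset (ℝ × ℝ)
  | [] => H
  | b :: rest => subPart (if b then oddPart H else evenPart H) rest

/-- `u` and `v` are consecutive points (in `x`-order) of `S`, with `u` to the left of `v`. -/
def ConsecutiveIn (S : Finset (ℝ × ℝ)) (u v : ℝ × ℝ) : Prop :=
  u ∈ S ∧ v ∈ S ∧ u.1 < v.1 ∧ ∀ w ∈ S, ¬ (u.1 < w.1 ∧ w.1 < v.1)

/-- The edge `(u, v)` of `H` (with `u.1 < v.1`, both endpoints in `H₁`) is visible from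
below: every point of `H₁` strictly between them lies strictly above the line `uv`. -/
def VisibleFromBelow (H : Finset (ℝ × ℝ)) (u v : ℝ × ℝ) : Prop :=
  u ∈ oddPart H ∧ v ∈ oddPart H ∧ u.1 < v.1 ∧
    ∀ w ∈ oddPart H, u.1 < w.1 → w.1 < v.1 → StrictlyAbove w u v

/-- The edge `(u, v)` of `H` (with `u.1 < v.1`, both endpoints in `H₀`) is visible from
above: every point of `H₀` strictly between them lies strictly below the line `uv`. -/
def VisibleFromAbove (H : Finset (ℝ × ℝ)) (u v : ℝ × ℝ) : Prop :=
  u ∈ evenPart H ∧ v ∈ evenPart H ∧ u.1 < v.1 ∧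
    ∀ w ∈ evenPart H, u.1 < w.1 → w.1 < v.1 → StrictlyBelow w u v

/-!
In a Horton set `S` the lines spanned by `S₀` pass below `S₁`, and those spanned by `S₁` pass above
`S₀`. So points of `S₁` never block an edge of `S₀` from below. If `u`, `v` are points of `S`, not
both in `S₀` and not consecutive, then alternation of parities puts a point `z` of `S₀` between
them, and the separation of `S₀` and `S₁` puts `z` below the line `uv`. Hence the edges of `S`
visible from below are the consecutive pairs of `S` and the edges visible from below in `S₀`, and
one recurses into `S₀`. Exchanging both the parities and the two sides gives visibility from above;
a single boolean records both choices.
-/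

/-- The side of the line `ac` on which `p` lies: above for `false`, below for `true`. The encoding
is chosen so that, in a Horton set, lines spanned by `H_b` have the other part on side `b`. -/
def OnSide : Bool → ℝ × ℝ → ℝ × ℝ → ℝ × ℝ → Prop
  | false => StrictlyAbove
  | true => StrictlyBelow

/-- The condition relating `H₀` and `H₁` in the definition of a Horton set, stated for both parts
at once: `DeepBelow` is the case `b = false` and `HighAbove` the case `b = true`. -/
def PartsSeparated (S : Finset (ℝ × ℝ)) : Prop :=
  ∀ b, ∀ a ∈ subPart S [b], ∀ c ∈ subPart S [b], a.1 < c.1 → ∀ p ∈ subPart S [!b], OnSide b p a c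

/-- Visibility of the edge `uv` within the whole set `S`: from below for `b = false`, from above
for `b = true`. Visibility from below (above) in `H` is visibility within `H₁` (`H₀`). -/
def VisibleIn (b : Bool) (S : Finset (ℝ × ℝ)) (u v : ℝ × ℝ) : Prop :=
  u ∈ S ∧ v ∈ S ∧ u.1 < v.1 ∧ ∀ w ∈ S, u.1 < w.1 → w.1 < v.1 → OnSide b w u v

section Orientation

variable {a c p : ℝ × ℝ} {b : Bool}

lemma orient_swap (a c p : ℝ × ℝ) : orient a p c = -orient a c p := by
  unfold orient; ring

lemma orient_rotate (a c p : ℝ × ℝ) : orient c p a = orient a c p := by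
  unfold orient; ring

lemma strictlyAbove_iff_orient_pos : StrictlyAbove p a c ↔ 0 < orient a c p :=
  sub_pos.symm

lemma strictlyBelow_iff_orient_neg : StrictlyBelow p a c ↔ orient a c p < 0 :=
  sub_neg.symm

lemma onSide_swap : OnSide (!b) c a p ↔ OnSide b p a c := by
  cases b <;> simp only [OnSide, Bool.not_false, Bool.not_true, strictlyAbove_iff_orient_pos,
    strictlyBelow_iff_orient_neg, orient_swap a c p, neg_pos, neg_lt_zero]

lemma onSide_rotate : OnSide b a c p ↔ OnSide b p a c := by
  cases b <;> simp only [OnSide, strictlyAbove_iff_orient_pos, strictlyBelow_iff_orient_neg,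
    orient_rotate a c p]

lemma OnSide.not_onSide_not (h : OnSide b p a c) : ¬OnSide (!b) p a c := by
  cases b
  · exact lt_asymm h
  · exact lt_asymm h

end Orientation

section Parts

variable {S : Finset (ℝ × ℝ)} {u v w p : ℝ × ℝ} {b : Bool}

lemma mem_subPart_singleton :
    p ∈ subPart S [b] ↔ p ∈ S ∧ (Odd (S.filter fun q => q.1 < p.1).card ↔ b = true) := by
  cases b <;> simp [subPart, evenPart, oddPart]

lemma mem_subPart_singleton_not (hp : p ∈ S) : p ∈ subPart S [!b] ↔ p ∉ subPart S [b] := by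
  cases b <;> simp [mem_subPart_singleton, hp]

lemma subPart_subset (S : Finset (ℝ × ℝ)) (l : List Bool) : subPart S l ⊆ S := by
  induction l generalizing S with
  | nil => exact Finset.Subset.refl S
  | cons b l ih => exact (ih _).trans fun _ hp => (mem_subPart_singleton.1 hp).1

lemma exists_consecutiveIn_right (hu : u ∈ S) (hw : w ∈ S) (huw : u.1 < w.1) :
    ∃ z, ConsecutiveIn S u z ∧ z.1 ≤ w.1 := by
  obtain ⟨z, hz, hmin⟩ := (S.filter fun q => u.1 < q.1).exists_min_image Prod.fst
    ⟨w, Finset.mem_filter.2 ⟨hw, huw⟩⟩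
  simp only [Finset.mem_filter, and_imp] at hz hmin
  exact ⟨z, ⟨hu, hz.1, hz.2, fun y hy hyz => (hmin y hy hyz.1).not_gt hyz.2⟩, hmin w hw huw⟩

lemma exists_consecutiveIn_left (hv : v ∈ S) (hw : w ∈ S) (hwv : w.1 < v.1) :
    ∃ z, ConsecutiveIn S z v ∧ w.1 ≤ z.1 := by
  obtain ⟨z, hz, hmax⟩ := (S.filter fun q => q.1 < v.1).exists_max_image Prod.fst
    ⟨w, Finset.mem_filter.2 ⟨hw, hwv⟩⟩
  simp only [Finset.mem_filter, and_imp] at hz hmax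
  exact ⟨z, ⟨hz.1, hv, hz.2, fun y hy hzy => (hmax y hy hzy.2).not_gt hzy.1⟩, hmax w hw hwv⟩

lemma consecutiveIn_of_card_le_two (hS : S.card ≤ 2) (hu : u ∈ S) (hv : v ∈ S)
    (huv : u.1 < v.1) : ConsecutiveIn S u v := by
  refine ⟨hu, hv, huv, fun w hw ⟨huw, hwv⟩ => hS.not_gt ?_⟩
  exact Finset.two_lt_card.2 ⟨u, hu, w, hw, v, hv, ne_of_apply_ne Prod.fst huw.ne,
    ne_of_apply_ne Prod.fst huv.ne, ne_of_apply_ne Prod.fst hwv.ne⟩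

lemma ConsecutiveIn.card_filter_lt (hx : DistinctX (S : Set (ℝ × ℝ)))
    (h : ConsecutiveIn S u v) :
    (S.filter fun q => q.1 < v.1).card = (S.filter fun q => q.1 < u.1).card + 1 := by
  obtain ⟨hu, -, huv, hnone⟩ := h
  have hinsert : (S.filter fun q => q.1 < v.1) = insert u (S.filter fun q => q.1 < u.1) := by
    ext q
    simp only [Finset.mem_filter, Finset.mem_insert]
    constructor
    · rintro ⟨hq, hqv⟩
      refine or_iff_not_imp_left.2 fun hqu => ⟨hq, ?_⟩
      exact (hx q hq u hu hqu).lt_of_le (not_lt.1 fun huq => hnone q hq ⟨huq, hqv⟩)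
    · rintro (rfl | ⟨hq, hqu⟩)
      · exact ⟨hu, huv⟩
      · exact ⟨hq, hqu.trans huv⟩
  rw [hinsert, Finset.card_insert_of_notMem (by simp)]

lemma ConsecutiveIn.mem_subPart_not_iff (hx : DistinctX (S : Set (ℝ × ℝ)))
    (h : ConsecutiveIn S u v) : v ∈ subPart S [!b] ↔ u ∈ subPart S [b] := by
  rw [mem_subPart_singleton_not h.2.1, mem_subPart_singleton, mem_subPart_singleton,
    h.card_filter_lt hx, Nat.odd_add_one]
  simp only [h.1, h.2.1, true_and]
  tauto

lemma exists_mem_subPart_between (hx : DistinctX (S : Set (ℝ × ℝ))) (hu : u ∈ S) (hv : v ∈ S)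
    (hw : w ∈ S) (huw : u.1 < w.1) (hwv : w.1 < v.1)
    (huv : ¬(u ∈ subPart S [b] ∧ v ∈ subPart S [b])) :
    ∃ z ∈ subPart S [b], u.1 < z.1 ∧ z.1 < v.1 := by
  rcases not_and_or.1 huv with hub | hvb
  · obtain ⟨z, hz, hzw⟩ := exists_consecutiveIn_right hu hw huw
    have hzb : z ∈ subPart S [b] := by
      simpa using (hz.mem_subPart_not_iff hx).2 ((mem_subPart_singleton_not hu).2 hub)
    exact ⟨z, hzb, hz.2.2.1, hzw.trans_lt hwv⟩
  · obtain ⟨z, hz, hwz⟩ := exists_consecutiveIn_left hv hw hwv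
    have hzb : z ∈ subPart S [b] :=
      (hz.mem_subPart_not_iff hx).1 ((mem_subPart_singleton_not hv).2 hvb)
    exact ⟨z, hzb, huw.trans_le hwz, hz.2.2.1⟩

end Parts

section Visibility

variable {S : Finset (ℝ × ℝ)} {u v z : ℝ × ℝ} {b : Bool}

lemma PartsSeparated.mem_subPart_of_onSide (hS : PartsSeparated S) (hu : u ∈ S) (hv : v ∈ S)
    (hz : z ∈ subPart S [b]) (huz : u.1 < z.1) (hzv : z.1 < v.1) (hside : OnSide b z u v) :
    u ∈ subPart S [b] ∧ v ∈ subPart S [b] := by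
  by_contra hnot
  refine hside.not_onSide_not ?_
  by_cases hub : u ∈ subPart S [b]
  · have hvb := (mem_subPart_singleton_not hv).2 fun hvb => hnot ⟨hub, hvb⟩
    exact onSide_swap.2 (hS b u hub z hz huz v hvb)
  have hub' := (mem_subPart_singleton_not hu).2 hub
  by_cases hvb : v ∈ subPart S [b]
  · exact onSide_swap.2 (onSide_rotate.1 (hS b z hz v hvb hzv u hub'))
  · have hvb' := (mem_subPart_singleton_not hv).2 hvb
    exact hS (!b) u hub' v hvb' (huz.trans hzv) z (by simpa using hz)

lemma ConsecutiveIn.visibleIn (h : ConsecutiveIn S u v) : VisibleIn b S u v :=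
  ⟨h.1, h.2.1, h.2.2.1, fun w hw huw hwv => (h.2.2.2 w hw ⟨huw, hwv⟩).elim⟩

lemma PartsSeparated.visibleIn_of_subPart (hS : PartsSeparated S)
    (h : VisibleIn b (subPart S [b]) u v) : VisibleIn b S u v := by
  obtain ⟨hu, hv, huv, hvis⟩ := h
  refine ⟨subPart_subset S _ hu, subPart_subset S _ hv, huv, fun w hw huw hwv => ?_⟩
  by_cases hwb : w ∈ subPart S [b]
  · exact hvis w hwb huw hwv
  · exact hS b u hu v hv huv w ((mem_subPart_singleton_not hw).2 hwb)

lemma PartsSeparated.visibleIn_iff (hS : PartsSeparated S) (hx : DistinctX (S : Set (ℝ × ℝ))) :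
    VisibleIn b S u v ↔ ConsecutiveIn S u v ∨ VisibleIn b (subPart S [b]) u v := by
  refine ⟨fun ⟨hu, hv, huv, hvis⟩ => ?_, fun h => h.elim (·.visibleIn) hS.visibleIn_of_subPart⟩
  by_cases hb : u ∈ subPart S [b] ∧ v ∈ subPart S [b]
  · exact .inr ⟨hb.1, hb.2, huv, fun w hw => hvis w (subPart_subset S _ hw)⟩
  refine .inl ⟨hu, hv, huv, fun w hw ⟨huw, hwv⟩ => hb ?_⟩
  obtain ⟨z, hz, huz, hzv⟩ := exists_mem_subPart_between hx hu hv hw huw hwv hb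
  exact hS.mem_subPart_of_onSide hu hv hz huz hzv (hvis z (subPart_subset S _ hz) huz hzv)

theorem IsHorton.visibleIn_iff_exists_consecutiveIn (hS : IsHorton S) (b : Bool) (u v : ℝ × ℝ) :
    VisibleIn b S u v ↔ ∃ k : ℕ, ConsecutiveIn (subPart S (List.replicate k b)) u v := by
  induction hS with
  | small S _ _ hcard =>
    constructor
    · rintro ⟨hu, hv, huv, -⟩
      exact ⟨0, consecutiveIn_of_card_le_two hcard hu hv huv⟩
    · rintro ⟨k, hu, hv, huv, -⟩
      exact (consecutiveIn_of_card_le_two hcard (subPart_subset S _ hu) (subPart_subset S _ hv)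
        huv).visibleIn
  | split S _ hx _ _ _ hhigh hdeep ih₀ ih₁ =>
    have hsep : PartsSeparated S := Bool.forall_bool.2 ⟨hdeep, hhigh⟩
    have ih : VisibleIn b (subPart S [b]) u v ↔
        ∃ k : ℕ, ConsecutiveIn (subPart S (List.replicate (k + 1) b)) u v := by
      cases b
      · exact ih₀
      · exact ih₁
    rw [hsep.visibleIn_iff hx, ih]
    exact Nat.or_exists_add_one (p := fun k => ConsecutiveIn (subPart S (List.replicate k b)) u v)

end Visibility

/-- An edge of a Horton set `H` is visible from below (above) iff its endpoints are two
consecutive points of `H_b`, where `b` is a single `1` (`0`) followed by an arbitrary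
number of `0`s (`1`s). -/
theorem visible_iff_consecutive (H : Finset (ℝ × ℝ)) (hH : IsHorton H)
    (hcard : 4 ≤ H.card) (u v : ℝ × ℝ) :
    (VisibleFromBelow H u v ↔
      ∃ k : ℕ, ConsecutiveIn (subPart H (true :: List.replicate k false)) u v) ∧
    (VisibleFromAbove H u v ↔
      ∃ k : ℕ, ConsecutiveIn (subPart H (false :: List.replicate k true)) u v) := by
  cases hH with
  | small _ _ hsmall => omega
  | split _ _ _ _ hH₀ hH₁ =>
    exact ⟨hH₁.visibleIn_iff_exists_consecutiveIn false u v,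
      hH₀.visibleIn_iff_exists_consecutiveIn true u v⟩
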